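/- Assume Π > 0 and Γ > 0 at every (x,y) ∈ U × (ℝⁿ∖{0}), and set D^i = 2G^i − 2·^αG^i, where G^i are the spray coefficients of F. Then at every (x,y): Ψ_s·^βr_00 + Ψ_s̄·^γr_00 = ℓ_r·D^r, where ℓ_r = ∂F/∂y^r. -/

import Mathlib

noncomputable section

open Set

/-- `a^{ij} u_i v_j` : the pairing of two covectors via the inverse matrix. -/
def quadInv {n : ℕ} (a : Matrix (Fin n) (Fin n) ℝ) (u v : Fin n → ℝ) : ℝ :=
  ∑ i, ∑ j, a⁻¹ i j * u i * v j

/-- `α(y) = √(a_{ij} y^i y^j)`. -/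
def alph {n : ℕ} (a : Matrix (Fin n) (Fin n) ℝ) (y : Fin n → ℝ) : ℝ :=
  Real.sqrt (∑ i, ∑ j, a i j * y i * y j)

/-- `v_i y^i`. -/
def oneForm {n : ℕ} (v y : Fin n → ℝ) : ℝ := ∑ i, v i * y i

/-- `s(y) = v_i y^i / α(y)`. -/
def sVar {n : ℕ} (a : Matrix (Fin n) (Fin n) ℝ) (v y : Fin n → ℝ) : ℝ :=
  oneForm v y / alph a y

/-- The (α,β,γ)-metric `F(y) = α·Ψ(s, s̄)`. -/
def Fm {n : ℕ} (a : Matrix (Fin n) (Fin n) ℝ) (bv gv : Fin n → ℝ)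
    (Ψ : ℝ → ℝ → ℝ) (y : Fin n → ℝ) : ℝ :=
  alph a y * Ψ (sVar a bv y) (sVar a gv y)

/-- Partial derivative of a function on `ℝⁿ` in the `i`-th coordinate direction. -/
def pd {n : ℕ} (f : (Fin n → ℝ) → ℝ) (y : Fin n → ℝ) (i : Fin n) : ℝ :=
  fderiv ℝ f y (Pi.single i 1)

/-- Second partial derivative. -/
def pd2 {n : ℕ} (f : (Fin n → ℝ) → ℝ) (y : Fin n → ℝ) (i j : Fin n) : ℝ :=
  pd (fun z => pd f z j) y i

/-- Partial derivative with respect to the first slot (`∂/∂s`). -/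
def Ds (Ψ : ℝ → ℝ → ℝ) : ℝ → ℝ → ℝ := fun p q => deriv (fun u => Ψ u q) p

/-- Partial derivative with respect to the second slot (`∂/∂s̄`). -/
def Dt (Ψ : ℝ → ℝ → ℝ) : ℝ → ℝ → ℝ := fun p q => deriv (fun v => Ψ p v) q

/-- `h_i = v_i − s·α_i`. -/
def hl {n : ℕ} (a : Matrix (Fin n) (Fin n) ℝ) (v y : Fin n → ℝ) (i : Fin n) : ℝ :=
  v i - sVar a v y * pd (alph a) y i

/-- Fundamental tensor `g_{ij} = ½ ∂²(F²)/∂yⁱ∂yʲ`. -/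
def fundT {n : ℕ} (F : (Fin n → ℝ) → ℝ) (y : Fin n → ℝ) (i j : Fin n) : ℝ :=
  (1 / 2) * pd2 (fun z => F z ^ 2) y i j

/-- `Π = Ψ − sΨ_s − s̄Ψ_s̄`. -/
def PiF (Ψ : ℝ → ℝ → ℝ) (p q : ℝ) : ℝ := Ψ p q - p * Ds Ψ p q - q * Dt Ψ p q

/-- `J = (Ψ_ss Ψ_s̄s̄ − Ψ_ss̄²)/Π`. -/
def JF (Ψ : ℝ → ℝ → ℝ) (p q : ℝ) : ℝ :=
  (Ds (Ds Ψ) p q * Dt (Dt Ψ) p q - Dt (Ds Ψ) p q ^ 2) / PiF Ψ p q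

/-- `Γ`, with `B = b²`, `G = g²`, `Θ = θ` as real parameters. -/
def GammaF (Ψ : ℝ → ℝ → ℝ) (B G Θ p q : ℝ) : ℝ :=
  PiF Ψ p q + (B - p ^ 2) * Ds (Ds Ψ) p q + (G - q ^ 2) * Dt (Dt Ψ) p q
    + 2 * (Θ - p * q) * Dt (Ds Ψ) p q
    + ((B - p ^ 2) * (G - q ^ 2) - (Θ - p * q) ^ 2) * JF Ψ p q

/-- `ρ = Ψ(Ψ − sΨ_s − s̄Ψ_s̄)`. -/
def rhoF (Ψ : ℝ → ℝ → ℝ) : ℝ → ℝ → ℝ := fun p q => Ψ p q * PiF Ψ p q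

/-- `ρ₀ = ΨΨ_ss + Ψ_s²`. -/
def rho0F (Ψ : ℝ → ℝ → ℝ) : ℝ → ℝ → ℝ := fun p q => Ψ p q * Ds (Ds Ψ) p q + Ds Ψ p q ^ 2

/-- `ρ̄₀ = ΨΨ_s̄s̄ + Ψ_s̄²`. -/
def rhobar0F (Ψ : ℝ → ℝ → ℝ) : ℝ → ℝ → ℝ := fun p q => Ψ p q * Dt (Dt Ψ) p q + Dt Ψ p q ^ 2

/-- `ρ₃ = ΨΨ_ss̄ + Ψ_sΨ_s̄`. -/
def rho3F (Ψ : ℝ → ℝ → ℝ) : ℝ → ℝ → ℝ :=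
  fun p q => Ψ p q * Dt (Ds Ψ) p q + Ds Ψ p q * Dt Ψ p q

/-- `ρ₁ = ΨΨ_s − sρ₀ − s̄ρ₃`. -/
def rho1F (Ψ : ℝ → ℝ → ℝ) : ℝ → ℝ → ℝ :=
  fun p q => Ψ p q * Ds Ψ p q - p * rho0F Ψ p q - q * rho3F Ψ p q

/-- `ρ̄₁ = ΨΨ_s̄ − s̄ρ̄₀ − sρ₃`. -/
def rhobar1F (Ψ : ℝ → ℝ → ℝ) : ℝ → ℝ → ℝ :=
  fun p q => Ψ p q * Dt Ψ p q - q * rhobar0F Ψ p q - p * rho3F Ψ p q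

/-- `ρ₂ = −sρ₁ − s̄ρ̄₁`. -/
def rho2F (Ψ : ℝ → ℝ → ℝ) : ℝ → ℝ → ℝ :=
  fun p q => -p * rho1F Ψ p q - q * rhobar1F Ψ p q

/-- `π₁ = Ψ_s̄Ψ_ss̄ − Ψ_sΨ_s̄s̄ + sΨJ`. -/
def pi1F (Ψ : ℝ → ℝ → ℝ) (p q : ℝ) : ℝ :=
  Dt Ψ p q * Dt (Ds Ψ) p q - Ds Ψ p q * Dt (Dt Ψ) p q + p * Ψ p q * JF Ψ p q

/-- `π₂ = Ψ_sΨ_ss̄ − Ψ_s̄Ψ_ss + s̄ΨJ`. -/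
def pi2F (Ψ : ℝ → ℝ → ℝ) (p q : ℝ) : ℝ :=
  Ds Ψ p q * Dt (Ds Ψ) p q - Dt Ψ p q * Ds (Ds Ψ) p q + q * Ψ p q * JF Ψ p q


/-- Christoffel symbols `Γ^k_{ij}` of the Riemannian metric `a_{ij}(x)`. -/
def chr {n : ℕ} (a : (Fin n → ℝ) → Matrix (Fin n) (Fin n) ℝ) (x : Fin n → ℝ)
    (k i j : Fin n) : ℝ :=
  (1 / 2) * ∑ l, (a x)⁻¹ k l *
    (pd (fun z => a z j l) x i + pd (fun z => a z i l) x j - pd (fun z => a z i j) x l)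

/-- Geodesic coefficients `^αG^i = ½ Γ^i_{jk} y^j y^k` of `α`. -/
def alphaG {n : ℕ} (a : (Fin n → ℝ) → Matrix (Fin n) (Fin n) ℝ) (x y : Fin n → ℝ)
    (i : Fin n) : ℝ :=
  (1 / 2) * ∑ j, ∑ k, chr a x i j k * y j * y k

/-- Covariant derivative `v_{i|j}` of a 1-form `v` with respect to `α`. -/
def covD {n : ℕ} (a : (Fin n → ℝ) → Matrix (Fin n) (Fin n) ℝ)
    (v : (Fin n → ℝ) → Fin n → ℝ) (x : Fin n → ℝ) (i j : Fin n) : ℝ :=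
  pd (fun z => v z i) x j - ∑ k, v x k * chr a x k i j

/-- `r_{ij} = ½(v_{i|j} + v_{j|i})`. -/
def rSym {n : ℕ} (a : (Fin n → ℝ) → Matrix (Fin n) (Fin n) ℝ)
    (v : (Fin n → ℝ) → Fin n → ℝ) (x : Fin n → ℝ) (i j : Fin n) : ℝ :=
  (1 / 2) * (covD a v x i j + covD a v x j i)

/-- `s_{ij} = ½(v_{i|j} − v_{j|i})`. -/
def sSym {n : ℕ} (a : (Fin n → ℝ) → Matrix (Fin n) (Fin n) ℝ)
    (v : (Fin n → ℝ) → Fin n → ℝ) (x : Fin n → ℝ) (i j : Fin n) : ℝ :=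
  (1 / 2) * (covD a v x i j - covD a v x j i)

/-- `r_{00} = r_{ij} y^i y^j`. -/
def r00 {n : ℕ} (a : (Fin n → ℝ) → Matrix (Fin n) (Fin n) ℝ)
    (v : (Fin n → ℝ) → Fin n → ℝ) (x y : Fin n → ℝ) : ℝ :=
  ∑ i, ∑ j, rSym a v x i j * y i * y j

/-- `s_{j0} = s_{jk} y^k`. -/
def s0low {n : ℕ} (a : (Fin n → ℝ) → Matrix (Fin n) (Fin n) ℝ)
    (v : (Fin n → ℝ) → Fin n → ℝ) (x y : Fin n → ℝ) (j : Fin n) : ℝ :=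
  ∑ k, sSym a v x j k * y k

/-- `s^i_0 = a^{ij} s_{j0}`. -/
def sUp0 {n : ℕ} (a : (Fin n → ℝ) → Matrix (Fin n) (Fin n) ℝ)
    (v : (Fin n → ℝ) → Fin n → ℝ) (x y : Fin n → ℝ) (i : Fin n) : ℝ :=
  ∑ j, (a x)⁻¹ i j * s0low a v x y j

/-- Contraction `w_i · (s of v)^i_0`. -/
def contrS {n : ℕ} (a : (Fin n → ℝ) → Matrix (Fin n) (Fin n) ℝ)
    (v w : (Fin n → ℝ) → Fin n → ℝ) (x y : Fin n → ℝ) : ℝ :=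
  ∑ i, w x i * sUp0 a v x y i

/-- Fundamental tensor of `F(x,·)` as a matrix. -/
def gmatF {n : ℕ} (F : (Fin n → ℝ) → (Fin n → ℝ) → ℝ) (x y : Fin n → ℝ) :
    Matrix (Fin n) (Fin n) ℝ :=
  Matrix.of fun i j => fundT (F x) y i j

/-- Spray coefficients `G^i = ¼ g^{il}(∂g_{jl}/∂x^k + ∂g_{lk}/∂x^j − ∂g_{jk}/∂x^l) y^j y^k`. -/
def sprayF {n : ℕ} (F : (Fin n → ℝ) → (Fin n → ℝ) → ℝ) (x y : Fin n → ℝ) (i : Fin n) : ℝ :=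
  (1 / 4) * ∑ l, (gmatF F x y)⁻¹ i l *
    ∑ j, ∑ k, (pd (fun z => gmatF F z y j l) x k
        + pd (fun z => gmatF F z y l k) x j
        - pd (fun z => gmatF F z y j k) x l) * y j * y k


/-! ### Calculus in the two slots -/

theorem hasF_two {S : Set (ℝ × ℝ)} (hS : IsOpen S) {f : ℝ → ℝ → ℝ}
    (hf : ContDiffOn ℝ (⊤ : ℕ∞) (fun p : ℝ × ℝ => f p.1 p.2) S) {p : ℝ × ℝ} (hp : p ∈ S) :
    HasFDerivAt (fun p : ℝ × ℝ => f p.1 p.2)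
      (Ds f p.1 p.2 • ContinuousLinearMap.fst ℝ ℝ ℝ + Dt f p.1 p.2 • ContinuousLinearMap.snd ℝ ℝ ℝ) p := by
  have h1 : DifferentiableAt ℝ (fun p : ℝ × ℝ => f p.1 p.2) p :=
    (hf.contDiffAt (hS.mem_nhds hp)).differentiableAt (by simp)
  have h := h1.hasFDerivAt
  set Z := fderiv ℝ (fun p : ℝ × ℝ => f p.1 p.2) p with hZ
  have e1 : Ds f p.1 p.2 = Z (1, 0) := by
    have hc : HasDerivAt (fun u : ℝ => ((u, p.2) : ℝ × ℝ)) (1, 0) p.1 :=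
      (hasDerivAt_id p.1).prodMk (hasDerivAt_const p.1 p.2)
    have := HasFDerivAt.comp_hasDerivAt (x := p.1) (f := fun u : ℝ => ((u, p.2) : ℝ × ℝ)) (l := fun p : ℝ × ℝ => f p.1 p.2) (l' := Z) h hc
    exact this.deriv
  have e2 : Dt f p.1 p.2 = Z (0, 1) := by
    have hc : HasDerivAt (fun u : ℝ => ((p.1, u) : ℝ × ℝ)) (0, 1) p.2 :=
      (hasDerivAt_const p.2 p.1).prodMk (hasDerivAt_id p.2)
    have := HasFDerivAt.comp_hasDerivAt (x := p.2) (f := fun u : ℝ => ((p.1, u) : ℝ × ℝ)) (l := fun p : ℝ × ℝ => f p.1 p.2) (l' := Z) h hc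
    exact this.deriv
  convert h using 1
  rw [e1, e2]
  ext <;> simp

theorem smooth_fd {S : Set (ℝ × ℝ)} (hS : IsOpen S) {f : ℝ → ℝ → ℝ}
    (hf : ContDiffOn ℝ (⊤ : ℕ∞) (fun p : ℝ × ℝ => f p.1 p.2) S) (v : ℝ × ℝ) :
    ContDiffOn ℝ (⊤ : ℕ∞) (fun p : ℝ × ℝ => fderiv ℝ (fun p : ℝ × ℝ => f p.1 p.2) p v) S := by
  have h := hf.fderiv_of_isOpen (m := (⊤ : ℕ∞)) hS (by simp)
  exact h.clm_apply contDiffOn_const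

theorem smooth_Ds {S : Set (ℝ × ℝ)} (hS : IsOpen S) {f : ℝ → ℝ → ℝ}
    (hf : ContDiffOn ℝ (⊤ : ℕ∞) (fun p : ℝ × ℝ => f p.1 p.2) S) :
    ContDiffOn ℝ (⊤ : ℕ∞) (fun p : ℝ × ℝ => Ds f p.1 p.2) S := by
  refine (smooth_fd hS hf (1, 0)).congr ?_
  intro p hp
  rw [(hasF_two hS hf hp).fderiv]; simp

theorem smooth_Dt {S : Set (ℝ × ℝ)} (hS : IsOpen S) {f : ℝ → ℝ → ℝ}
    (hf : ContDiffOn ℝ (⊤ : ℕ∞) (fun p : ℝ × ℝ => f p.1 p.2) S) :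
    ContDiffOn ℝ (⊤ : ℕ∞) (fun p : ℝ × ℝ => Dt f p.1 p.2) S := by
  refine (smooth_fd hS hf (0, 1)).congr ?_
  intro p hp
  rw [(hasF_two hS hf hp).fderiv]; simp

theorem Ds_of_hasF {f : ℝ → ℝ → ℝ} {p q : ℝ} {Z : ℝ × ℝ →L[ℝ] ℝ}
    (h : HasFDerivAt (fun p : ℝ × ℝ => f p.1 p.2) Z (p, q)) : Ds f p q = Z (1, 0) := by
  have hc : HasDerivAt (fun u : ℝ => ((u, q) : ℝ × ℝ)) (1, 0) p :=
    (hasDerivAt_id p).prodMk (hasDerivAt_const p q)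
  have := HasFDerivAt.comp_hasDerivAt (x := p) (f := fun u : ℝ => ((u, q) : ℝ × ℝ)) (l := fun p : ℝ × ℝ => f p.1 p.2) (l' := Z) h hc
  exact this.deriv

theorem Dt_of_hasF {f : ℝ → ℝ → ℝ} {p q : ℝ} {Z : ℝ × ℝ →L[ℝ] ℝ}
    (h : HasFDerivAt (fun p : ℝ × ℝ => f p.1 p.2) Z (p, q)) : Dt f p q = Z (0, 1) := by
  have hc : HasDerivAt (fun u : ℝ => ((p, u) : ℝ × ℝ)) (0, 1) q :=
    (hasDerivAt_const q p).prodMk (hasDerivAt_id q)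
  have := HasFDerivAt.comp_hasDerivAt (x := q) (f := fun u : ℝ => ((p, u) : ℝ × ℝ)) (l := fun p : ℝ × ℝ => f p.1 p.2) (l' := Z) h hc
  exact this.deriv

theorem Ds_Dt_comm {S : Set (ℝ × ℝ)} (hS : IsOpen S) {f : ℝ → ℝ → ℝ}
    (hf : ContDiffOn ℝ (⊤ : ℕ∞) (fun p : ℝ × ℝ => f p.1 p.2) S) {p q : ℝ} (hp : (p, q) ∈ S) :
    Ds (Dt f) p q = Dt (Ds f) p q := by
  set W := fun p : ℝ × ℝ => f p.1 p.2 with hW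
  have hcd : ContDiffAt ℝ (⊤ : ℕ∞) W (p, q) := hf.contDiffAt (hS.mem_nhds hp)
  have hsym : IsSymmSndFDerivAt ℝ W (p, q) := hcd.isSymmSndFDerivAt (by
    rw [minSmoothness_of_isRCLikeNormedField]
    exact WithTop.coe_le_coe.2 (le_top : (2 : ℕ∞) ≤ ⊤))
  have hd : DifferentiableAt ℝ (fderiv ℝ W) (p, q) :=
    ((hf.fderiv_of_isOpen (m := (⊤ : ℕ∞)) hS (by simp)).contDiffAt (hS.mem_nhds hp)).differentiableAt
      (by simp)
  have key : ∀ v : ℝ × ℝ, HasFDerivAt (fun p => fderiv ℝ W p v)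
      ((fderiv ℝ (fderiv ℝ W) (p, q)).flip v) (p, q) := by
    intro v
    have := hd.hasFDerivAt.clm_apply (hasFDerivAt_const v (p, q))
    simpa using this
  have e1 : (fun p : ℝ × ℝ => Dt f p.1 p.2) =ᶠ[nhds (p, q)] fun p => fderiv ℝ W p (0, 1) := by
    filter_upwards [hS.mem_nhds hp] with r hr
    rw [(hasF_two hS hf hr).fderiv]; simp
  have e2 : (fun p : ℝ × ℝ => Ds f p.1 p.2) =ᶠ[nhds (p, q)] fun p => fderiv ℝ W p (1, 0) := by
    filter_upwards [hS.mem_nhds hp] with r hr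
    rw [(hasF_two hS hf hr).fderiv]; simp
  rw [Ds_of_hasF ((key (0, 1)).congr_of_eventuallyEq e1),
    Dt_of_hasF ((key (1, 0)).congr_of_eventuallyEq e2)]
  simpa using hsym.eq (1, 0) (0, 1)

/-- `Q = ΨΨ_s`. -/
def QF (Ψ : ℝ → ℝ → ℝ) : ℝ → ℝ → ℝ := fun p q => Ψ p q * Ds Ψ p q

/-- `R = ΨΨ_s̄`. -/
def RF (Ψ : ℝ → ℝ → ℝ) : ℝ → ℝ → ℝ := fun p q => Ψ p q * Dt Ψ p q

section slots
variable {S : Set (ℝ × ℝ)} {Ψ : ℝ → ℝ → ℝ}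

theorem smooth_QF (hS : IsOpen S)
    (hf : ContDiffOn ℝ (⊤ : ℕ∞) (fun p : ℝ × ℝ => Ψ p.1 p.2) S) :
    ContDiffOn ℝ (⊤ : ℕ∞) (fun p : ℝ × ℝ => QF Ψ p.1 p.2) S := hf.mul (smooth_Ds hS hf)

theorem smooth_RF (hS : IsOpen S)
    (hf : ContDiffOn ℝ (⊤ : ℕ∞) (fun p : ℝ × ℝ => Ψ p.1 p.2) S) :
    ContDiffOn ℝ (⊤ : ℕ∞) (fun p : ℝ × ℝ => RF Ψ p.1 p.2) S := hf.mul (smooth_Dt hS hf)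

theorem smooth_PiF (hS : IsOpen S)
    (hf : ContDiffOn ℝ (⊤ : ℕ∞) (fun p : ℝ × ℝ => Ψ p.1 p.2) S) :
    ContDiffOn ℝ (⊤ : ℕ∞) (fun p : ℝ × ℝ => PiF Ψ p.1 p.2) S :=
  (hf.sub (contDiff_fst.contDiffOn.mul (smooth_Ds hS hf))).sub
    (contDiff_snd.contDiffOn.mul (smooth_Dt hS hf))

theorem smooth_rhoF (hS : IsOpen S)
    (hf : ContDiffOn ℝ (⊤ : ℕ∞) (fun p : ℝ × ℝ => Ψ p.1 p.2) S) :
    ContDiffOn ℝ (⊤ : ℕ∞) (fun p : ℝ × ℝ => rhoF Ψ p.1 p.2) S := hf.mul (smooth_PiF hS hf)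

theorem dQF (hS : IsOpen S) (hf : ContDiffOn ℝ (⊤ : ℕ∞) (fun p : ℝ × ℝ => Ψ p.1 p.2) S)
    {p q : ℝ} (hp : (p, q) ∈ S) :
    Ds (QF Ψ) p q = Ds Ψ p q * Ds Ψ p q + Ψ p q * Ds (Ds Ψ) p q ∧
    Dt (QF Ψ) p q = Dt Ψ p q * Ds Ψ p q + Ψ p q * Dt (Ds Ψ) p q := by
  have h := (hasF_two hS hf hp).mul (hasF_two hS (smooth_Ds hS hf) hp)
  have e1 := Ds_of_hasF (f := QF Ψ) h
  have e2 := Dt_of_hasF (f := QF Ψ) h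
  constructor
  · rw [e1]; simp; ring
  · rw [e2]; simp; ring

theorem dRF (hS : IsOpen S) (hf : ContDiffOn ℝ (⊤ : ℕ∞) (fun p : ℝ × ℝ => Ψ p.1 p.2) S)
    {p q : ℝ} (hp : (p, q) ∈ S) :
    Ds (RF Ψ) p q = Ds Ψ p q * Dt Ψ p q + Ψ p q * Dt (Ds Ψ) p q ∧
    Dt (RF Ψ) p q = Dt Ψ p q * Dt Ψ p q + Ψ p q * Dt (Dt Ψ) p q := by
  have h := (hasF_two hS hf hp).mul (hasF_two hS (smooth_Dt hS hf) hp)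
  have e1 := Ds_of_hasF (f := RF Ψ) h
  have e2 := Dt_of_hasF (f := RF Ψ) h
  constructor
  · rw [e1, ← Ds_Dt_comm hS hf hp]; simp; ring
  · rw [e2]; simp; ring

theorem drhoF (hS : IsOpen S) (hf : ContDiffOn ℝ (⊤ : ℕ∞) (fun p : ℝ × ℝ => Ψ p.1 p.2) S)
    {p q : ℝ} (hp : (p, q) ∈ S) :
    Ds (rhoF Ψ) p q = QF Ψ p q - p * Ds (QF Ψ) p q - q * Ds (RF Ψ) p q ∧
    Dt (rhoF Ψ) p q = RF Ψ p q - p * Dt (QF Ψ) p q - q * Dt (RF Ψ) p q := by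
  have hΨ := hasF_two hS hf hp
  have h := ((hΨ.mul hΨ).sub (hasFDerivAt_fst.mul (hasF_two hS (smooth_QF hS hf) hp))).sub
    (hasFDerivAt_snd.mul (hasF_two hS (smooth_RF hS hf) hp))
  have h' : HasFDerivAt (fun p : ℝ × ℝ => rhoF Ψ p.1 p.2) _ (p, q) :=
    h.congr_of_eventuallyEq (Filter.Eventually.of_forall fun r => by
      simp only [rhoF, PiF, QF, RF, Pi.mul_apply, Pi.sub_apply]; ring)
  constructor
  · rw [Ds_of_hasF h']; simp [QF, RF]
    try ring
  · rw [Dt_of_hasF h']; simp [QF, RF]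
    try ring

end slots

/-! ### Pointwise linear algebra -/

section pointwise
variable {n : ℕ}

open Matrix

theorem quad_eq (A : Matrix (Fin n) (Fin n) ℝ) (u w : Fin n → ℝ) :
    ∑ i, ∑ j, A i j * u i * w j = u ⬝ᵥ (A *ᵥ w) := by
  simp only [dotProduct, mulVec, Finset.mul_sum]
  exact Finset.sum_congr rfl fun i _ => Finset.sum_congr rfl fun j _ => by ring

theorem alph_pos {A : Matrix (Fin n) (Fin n) ℝ} (hA : A.PosDef) {y : Fin n → ℝ} (hy : y ≠ 0) :
    0 < alph A y := by
  unfold alph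
  rw [quad_eq]
  exact Real.sqrt_pos.2 (by simpa using hA.dotProduct_mulVec_pos hy)

theorem alph_sq {A : Matrix (Fin n) (Fin n) ℝ} (hA : A.PosDef) (y : Fin n → ℝ) :
    alph A y * alph A y = y ⬝ᵥ (A *ᵥ y) := by
  unfold alph
  rw [quad_eq]
  exact Real.mul_self_sqrt (by simpa using hA.posSemidef.dotProduct_mulVec_nonneg y)

theorem symm_dot {A : Matrix (Fin n) (Fin n) ℝ} (hA : A.PosDef) (u w : Fin n → ℝ) :
    u ⬝ᵥ (A *ᵥ w) = w ⬝ᵥ (A *ᵥ u) := by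
  have h : Aᵀ = A := by
    have := hA.isHermitian.eq
    rwa [conjTranspose_eq_transpose_of_trivial] at this
  rw [dotProduct_mulVec, ← mulVec_transpose, h, dotProduct_comm]

theorem inv_mulVec {A : Matrix (Fin n) (Fin n) ℝ} (hA : A.PosDef) (u : Fin n → ℝ) :
    A *ᵥ (A⁻¹ *ᵥ u) = u := by
  rw [mulVec_mulVec, mul_nonsing_inv _ ((isUnit_iff_isUnit_det _).1 hA.isUnit), one_mulVec]

theorem quadInv_eq (A : Matrix (Fin n) (Fin n) ℝ) (u w : Fin n → ℝ) :
    quadInv A u w = u ⬝ᵥ (A⁻¹ *ᵥ w) := quad_eq _ _ _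

theorem quadInv_symm {A : Matrix (Fin n) (Fin n) ℝ} (hA : A.PosDef) (u w : Fin n → ℝ) :
    quadInv A u w = quadInv A w u := by
  rw [quadInv_eq, quadInv_eq, symm_dot hA.inv]

/-- The vector `a^{ij}h_j`. -/
def hUp (A : Matrix (Fin n) (Fin n) ℝ) (v y : Fin n → ℝ) : Fin n → ℝ :=
  A⁻¹ *ᵥ v - (sVar A v y / alph A y) • y

theorem hUp_A {A : Matrix (Fin n) (Fin n) ℝ} (hA : A.PosDef) (v y w : Fin n → ℝ) :
    hUp A v y ⬝ᵥ (A *ᵥ w) = v ⬝ᵥ w - sVar A v y * ((A *ᵥ y) ⬝ᵥ w / alph A y) := by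
  rw [symm_dot hA, hUp, mulVec_sub, inv_mulVec hA, mulVec_smul, dotProduct_sub, dotProduct_smul,
    dotProduct_comm w v, dotProduct_comm w (A *ᵥ y), smul_eq_mul]
  ring

theorem hUp_y {A : Matrix (Fin n) (Fin n) ℝ} (hA : A.PosDef) {y : Fin n → ℝ} (hy : y ≠ 0)
    (v : Fin n → ℝ) : hUp A v y ⬝ᵥ (A *ᵥ y) = 0 := by
  have h := alph_pos hA hy
  rw [hUp_A hA, dotProduct_comm (A *ᵥ y), ← alph_sq hA]
  have : v ⬝ᵥ y = oneForm v y := rfl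
  rw [this, sVar]
  field_simp
  ring

theorem hUp_dot {A : Matrix (Fin n) (Fin n) ℝ} (hA : A.PosDef) {y : Fin n → ℝ} (v u : Fin n → ℝ) :
    hUp A v y ⬝ᵥ u = quadInv A v u - sVar A v y * sVar A u y := by
  rw [quadInv_symm hA, quadInv_eq, hUp, sub_dotProduct, smul_dotProduct, dotProduct_comm _ u,
    dotProduct_comm y u]
  have : u ⬝ᵥ y = oneForm u y := rfl
  rw [this]
  simp only [sVar, smul_eq_mul]
  ring

theorem sVar_mem {A : Matrix (Fin n) (Fin n) ℝ} (hA : A.PosDef) {y : Fin n → ℝ} (hy : y ≠ 0)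
    {v : Fin n → ℝ} {b : ℝ} (hb : Real.sqrt (quadInv A v v) < b) :
    sVar A v y ∈ Set.Ioo (-b) b := by
  have h1 : 0 ≤ hUp A v y ⬝ᵥ (A *ᵥ hUp A v y) := by
    simpa using hA.posSemidef.dotProduct_mulVec_nonneg (hUp A v y)
  rw [hUp_A hA, dotProduct_comm (A *ᵥ y), hUp_y hA hy, dotProduct_comm, hUp_dot hA] at h1
  have h2 : sVar A v y ^ 2 ≤ quadInv A v v := by
    have : 0 ≤ quadInv A v v - sVar A v y * sVar A v y := by simpa using h1
    nlinarith
  have := Real.abs_le_sqrt h2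
  exact abs_lt.1 (this.trans_lt hb)

/-! ### Derivatives in `y` -/

/-- `w ↦ u·w` as a continuous linear map. -/
def dotL (u : Fin n → ℝ) : (Fin n → ℝ) →L[ℝ] ℝ :=
  ∑ i, u i • ContinuousLinearMap.proj (R := ℝ) (φ := fun _ : Fin n => ℝ) i

theorem dotL_apply (u w : Fin n → ℝ) : dotL u w = u ⬝ᵥ w := by
  simp [dotL, dotProduct]

theorem dotL_has (u y : Fin n → ℝ) : HasFDerivAt (fun w => u ⬝ᵥ w) (dotL u) y :=
  (dotL u).hasFDerivAt.congr_of_eventuallyEq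
    (Filter.Eventually.of_forall fun w => (dotL_apply u w).symm)

theorem alph_has {A : Matrix (Fin n) (Fin n) ℝ} (hA : A.PosDef) {y : Fin n → ℝ} (hy : y ≠ 0) :
    HasFDerivAt (alph A) ((alph A y)⁻¹ • dotL (A *ᵥ y)) y := by
  have hpos := alph_pos hA hy
  have hq : HasFDerivAt (fun w : Fin n → ℝ => ∑ i, w i * ((A i) ⬝ᵥ w))
      ((2 : ℝ) • dotL (A *ᵥ y)) y := by
    have : ∀ i ∈ (Finset.univ : Finset (Fin n)), HasFDerivAt (fun w : Fin n → ℝ => w i * ((A i) ⬝ᵥ w))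
        (y i • dotL (A i) + ((A i) ⬝ᵥ y) • ContinuousLinearMap.proj (R := ℝ) (φ := fun _ : Fin n => ℝ) i) y :=
      fun i _ => (hasFDerivAt_apply i y).mul (dotL_has (A i) y)
    have h := HasFDerivAt.fun_sum this
    refine h.congr_fderiv ?_
    refine ContinuousLinearMap.ext fun w => ?_
    have h2 : ∑ i, y i * ((A i) ⬝ᵥ w) = (A *ᵥ y) ⬝ᵥ w := by
      change y ⬝ᵥ (A *ᵥ w) = _
      rw [symm_dot hA, dotProduct_comm]
    have h3 : ∑ i, ((A i) ⬝ᵥ y) * w i = (A *ᵥ y) ⬝ᵥ w := rfl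
    simp only [_root_.smul_apply, _root_.sum_apply,
      _root_.add_apply, dotL_apply, smul_eq_mul, ContinuousLinearMap.proj_apply,
      Finset.sum_add_distrib, h2, h3]
    ring
  have e : ∀ w, ∑ i, ∑ j, A i j * w i * w j = ∑ i, w i * ((A i) ⬝ᵥ w) := fun w => quad_eq A w w
  have hne : ∑ i, y i * ((A i) ⬝ᵥ y) ≠ 0 := by
    have : alph A y * alph A y = ∑ i, y i * ((A i) ⬝ᵥ y) := alph_sq hA y
    rw [← this]; positivity
  have h := hq.sqrt hne
  have e2 : alph A = fun w => Real.sqrt (∑ i, w i * ((A i) ⬝ᵥ w)) := by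
    funext w; unfold alph; rw [e]
  have e3 : Real.sqrt (∑ i, y i * ((A i) ⬝ᵥ y)) = alph A y := by rw [e2]
  rw [e3] at h
  rw [← e2] at h
  refine h.congr_fderiv ?_
  refine ContinuousLinearMap.ext fun w => ?_
  simp only [_root_.smul_apply, smul_eq_mul]
  field_simp

/-- General chain rule for `f(β/α, γ/α)`. -/
theorem comp_has {E : Type*} [NormedAddCommGroup E] [NormedSpace ℝ E] {S : Set (ℝ × ℝ)}
    (hS : IsOpen S) {f : ℝ → ℝ → ℝ}
    (hf : ContDiffOn ℝ (⊤ : ℕ∞) (fun p : ℝ × ℝ => f p.1 p.2) S)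
    {α β γ : E → ℝ} {α' β' γ' : E →L[ℝ] ℝ} {y : E} (hα : HasFDerivAt α α' y)
    (hβ : HasFDerivAt β β' y) (hγ : HasFDerivAt γ γ' y) (h0 : α y ≠ 0)
    (hm : (β y / α y, γ y / α y) ∈ S) :
    HasFDerivAt (fun w => f (β w / α w) (γ w / α w))
      ((Ds f (β y / α y) (γ y / α y) / α y) • (β' - (β y / α y) • α') +
        (Dt f (β y / α y) (γ y / α y) / α y) • (γ' - (γ y / α y) • α')) y := by
  have hd : ∀ {η : E → ℝ} {η' : E →L[ℝ] ℝ}, HasFDerivAt η η' y →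
      HasFDerivAt (fun w => η w / α w) ((α y)⁻¹ • (η' - (η y / α y) • α')) y := by
    intro η η' hη
    have h := hη.mul ((hasDerivAt_inv h0).comp_hasFDerivAt y hα)
    refine (h.congr_of_eventuallyEq (Filter.Eventually.of_forall fun w => div_eq_mul_inv _ _)).congr_fderiv ?_
    refine ContinuousLinearMap.ext fun w => ?_
    simp
    field_simp
    ring
  have h1 := (hd hβ).prodMk (hd hγ)
  have h2 := (hasF_two hS hf hm).comp y (f := fun w => (β w / α w, γ w / α w)) h1
  refine h2.congr_fderiv ?_
  refine ContinuousLinearMap.ext fun w => ?_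
  simp
  field_simp

/-- First derivative of `F = αΨ(β/α, γ/α)`. -/
theorem F_has {E : Type*} [NormedAddCommGroup E] [NormedSpace ℝ E] {S : Set (ℝ × ℝ)}
    (hS : IsOpen S) {f : ℝ → ℝ → ℝ}
    (hf : ContDiffOn ℝ (⊤ : ℕ∞) (fun p : ℝ × ℝ => f p.1 p.2) S)
    {α β γ : E → ℝ} {α' β' γ' : E →L[ℝ] ℝ} {y : E} (hα : HasFDerivAt α α' y)
    (hβ : HasFDerivAt β β' y) (hγ : HasFDerivAt γ γ' y) (h0 : α y ≠ 0)
    (hm : (β y / α y, γ y / α y) ∈ S) :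
    HasFDerivAt (fun w => α w * f (β w / α w) (γ w / α w))
      (PiF f (β y / α y) (γ y / α y) • α' + Ds f (β y / α y) (γ y / α y) • β' +
        Dt f (β y / α y) (γ y / α y) • γ') y := by
  refine (hα.mul (comp_has hS hf hα hβ hγ h0 hm)).congr_fderiv ?_
  refine ContinuousLinearMap.ext fun w => ?_
  simp [PiF]
  field_simp
  ring

theorem sum_pd (L : (Fin n → ℝ) →L[ℝ] ℝ) (v : Fin n → ℝ) :
    ∑ i, v i * L (Pi.single i 1) = L v := by
  conv_rhs => rw [show v = ∑ i, v i • (Pi.single i 1 : Fin n → ℝ) by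
    ext j; simp [Finset.sum_apply, Pi.single_apply]]
  simp

variable {S : Set (ℝ × ℝ)} {Ψ : ℝ → ℝ → ℝ} {A : Matrix (Fin n) (Fin n) ℝ} {b g : Fin n → ℝ}

theorem Fm_has (hS : IsOpen S) (hf : ContDiffOn ℝ (⊤ : ℕ∞) (fun p : ℝ × ℝ => Ψ p.1 p.2) S)
    (hA : A.PosDef) {y : Fin n → ℝ} (hy : y ≠ 0) (hm : (sVar A b y, sVar A g y) ∈ S) :
    HasFDerivAt (Fm A b g Ψ)
      (PiF Ψ (sVar A b y) (sVar A g y) • ((alph A y)⁻¹ • dotL (A *ᵥ y))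
        + Ds Ψ (sVar A b y) (sVar A g y) • dotL b + Dt Ψ (sVar A b y) (sVar A g y) • dotL g) y :=
  F_has hS hf (alph_has hA hy) (dotL_has b y) (dotL_has g y) (alph_pos hA hy).ne' hm

theorem Fsq_pd (hS : IsOpen S) (hf : ContDiffOn ℝ (⊤ : ℕ∞) (fun p : ℝ × ℝ => Ψ p.1 p.2) S)
    (hA : A.PosDef) {y : Fin n → ℝ} (hy : y ≠ 0) (hm : (sVar A b y, sVar A g y) ∈ S) (j : Fin n) :
    pd (fun z => Fm A b g Ψ z ^ 2) y j =
      2 * (rhoF Ψ (sVar A b y) (sVar A g y) * (A j ⬝ᵥ y)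
        + alph A y * (QF Ψ (sVar A b y) (sVar A g y) * b j)
        + alph A y * (RF Ψ (sVar A b y) (sVar A g y) * g j)) := by
  have h := (Fm_has (b := b) (g := g) hS hf hA hy hm).pow 2
  have hpos := alph_pos hA hy
  unfold pd
  rw [h.fderiv]
  simp [dotL_apply, rhoF, QF, RF, Fm]
  rw [show (A *ᵥ y) j = A j ⬝ᵥ y from rfl]
  field_simp

/-- The explicit form of `v^i g_{ij}`. -/
def gv1 (Ψ : ℝ → ℝ → ℝ) (α p q m X Y Av Ay bj gj : ℝ) : ℝ :=
  rhoF Ψ p q * Av + (Ds (rhoF Ψ) p q * X + Dt (rhoF Ψ) p q * Y) / α * Ay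
    + (m * QF Ψ p q + Ds (QF Ψ) p q * X + Dt (QF Ψ) p q * Y) * bj
    + (m * RF Ψ p q + Ds (RF Ψ) p q * X + Dt (RF Ψ) p q * Y) * gj

theorem fund_has (hS : IsOpen S) (hf : ContDiffOn ℝ (⊤ : ℕ∞) (fun p : ℝ × ℝ => Ψ p.1 p.2) S)
    (hA : A.PosDef) (hm : ∀ y : Fin n → ℝ, y ≠ 0 → (sVar A b y, sVar A g y) ∈ S)
    {y : Fin n → ℝ} (hy : y ≠ 0) (v : Fin n → ℝ) (j : Fin n) :
    ∑ i, v i * fundT (Fm A b g Ψ) y i j =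
      gv1 Ψ (alph A y) (sVar A b y) (sVar A g y) ((A *ᵥ y) ⬝ᵥ v / alph A y)
        (b ⬝ᵥ v - sVar A b y * ((A *ᵥ y) ⬝ᵥ v / alph A y))
        (g ⬝ᵥ v - sVar A g y * ((A *ᵥ y) ⬝ᵥ v / alph A y))
        ((A *ᵥ v) j) ((A *ᵥ y) j) (b j) (g j) := by
  have hpos := alph_pos hA hy
  have hα := alph_has hA hy
  have hc : ∀ f : ℝ → ℝ → ℝ, ContDiffOn ℝ (⊤ : ℕ∞) (fun p : ℝ × ℝ => f p.1 p.2) S →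
      HasFDerivAt (fun w => f (sVar A b w) (sVar A g w)) _ y := fun f h =>
    comp_has hS h hα (dotL_has b y) (dotL_has g y) hpos.ne' (hm y hy)
  have h := ((((hc _ (smooth_rhoF hS hf)).mul (dotL_has (A j) y)).add
    (hα.mul ((hc _ (smooth_QF hS hf)).mul_const (b j)))).add
    (hα.mul ((hc _ (smooth_RF hS hf)).mul_const (g j)))).const_mul 2
  have hev : (fun z => pd (fun z => Fm A b g Ψ z ^ 2) z j) =ᶠ[nhds y] fun y =>
      2 * (rhoF Ψ (sVar A b y) (sVar A g y) * (A j ⬝ᵥ y)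
        + alph A y * (QF Ψ (sVar A b y) (sVar A g y) * b j)
        + alph A y * (RF Ψ (sVar A b y) (sVar A g y) * g j)) := by
    filter_upwards [isOpen_ne.mem_nhds hy] with w hw
    exact Fsq_pd hS hf hA hw (hm w hw) j
  have h' := h.congr_of_eventuallyEq hev
  unfold fundT pd2
  have e : ∀ i, v i * (1 / 2 * pd (fun z => pd (fun z => Fm A b g Ψ z ^ 2) z j) y i)
      = 1 / 2 * (v i * (fderiv ℝ (fun z => pd (fun z => Fm A b g Ψ z ^ 2) z j) y) (Pi.single i 1)) := by
    intro i; unfold pd; ring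
  rw [Finset.sum_congr rfl fun i _ => e i, ← Finset.mul_sum, sum_pd, h'.fderiv]
  rw [show (A *ᵥ v) j = A j ⬝ᵥ v from rfl, show (A *ᵥ y) j = A j ⬝ᵥ y from rfl]
  have e1 : oneForm b y / alph A y = sVar A b y := rfl
  have e2 : oneForm g y / alph A y = sVar A g y := rfl
  simp only [e1, e2, gv1, _root_.smul_apply, _root_.add_apply,
    _root_.sub_apply, dotL_apply, smul_eq_mul]
  field_simp
  ring

end pointwise

section final
variable {n : ℕ}

open Matrix

variable {S : Set (ℝ × ℝ)} {Ψ : ℝ → ℝ → ℝ} {A : Matrix (Fin n) (Fin n) ℝ} {b g : Fin n → ℝ}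

/-- Euler: `y^i g_{ij} = F ℓ_j`. -/
theorem fund_euler (hS : IsOpen S) (hf : ContDiffOn ℝ (⊤ : ℕ∞) (fun p : ℝ × ℝ => Ψ p.1 p.2) S)
    (hA : A.PosDef) (hm : ∀ y : Fin n → ℝ, y ≠ 0 → (sVar A b y, sVar A g y) ∈ S)
    {y : Fin n → ℝ} (hy : y ≠ 0) (j : Fin n) :
    ∑ i, y i * fundT (Fm A b g Ψ) y i j = Fm A b g Ψ y * pd (Fm A b g Ψ) y j := by
  have hpos := alph_pos hA hy
  rw [fund_has hS hf hA hm hy]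
  have e1 : (A *ᵥ y) ⬝ᵥ y / alph A y = alph A y := by
    rw [dotProduct_comm, ← alph_sq hA]; field_simp
  have e2 : b ⬝ᵥ y - sVar A b y * alph A y = 0 := by
    rw [show b ⬝ᵥ y = oneForm b y from rfl, sVar]; field_simp; ring
  have e3 : g ⬝ᵥ y - sVar A g y * alph A y = 0 := by
    rw [show g ⬝ᵥ y = oneForm g y from rfl, sVar]; field_simp; ring
  rw [e1, e2, e3]
  unfold pd
  rw [(Fm_has hS hf hA hy (hm y hy)).fderiv]
  simp [dotL_apply, gv1, rhoF, QF, RF, Fm]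
  field_simp

/-- Euler for `F`. -/
theorem F_euler (hS : IsOpen S) (hf : ContDiffOn ℝ (⊤ : ℕ∞) (fun p : ℝ × ℝ => Ψ p.1 p.2) S)
    (hA : A.PosDef) (hm : ∀ y : Fin n → ℝ, y ≠ 0 → (sVar A b y, sVar A g y) ∈ S)
    {y : Fin n → ℝ} (hy : y ≠ 0) :
    ∑ j, y j * pd (Fm A b g Ψ) y j = Fm A b g Ψ y := by
  have hpos := alph_pos hA hy
  unfold pd
  rw [sum_pd, (Fm_has hS hf hA hy (hm y hy)).fderiv]
  have e1 : (A *ᵥ y) ⬝ᵥ y = alph A y * alph A y := by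
    rw [dotProduct_comm, ← alph_sq hA]
  have e2 : b ⬝ᵥ y = sVar A b y * alph A y := by
    rw [show b ⬝ᵥ y = oneForm b y from rfl, sVar]; field_simp
  have e3 : g ⬝ᵥ y = sVar A g y * alph A y := by
    rw [show g ⬝ᵥ y = oneForm g y from rfl, sVar]; field_simp
  simp only [_root_.smul_apply, _root_.add_apply, dotL_apply, smul_eq_mul, e1, e2, e3, PiF, Fm]
  field_simp
  ring

theorem sum_gv1 (α p q m X Y : ℝ) (w u1 u2 u3 u4 : Fin n → ℝ) :
    ∑ j, w j * gv1 Ψ α p q m X Y (u1 j) (u2 j) (u3 j) (u4 j) =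
      gv1 Ψ α p q m X Y (w ⬝ᵥ u1) (w ⬝ᵥ u2) (w ⬝ᵥ u3) (w ⬝ᵥ u4) := by
  simp only [gv1, dotProduct, Finset.mul_sum, ← Finset.sum_add_distrib]
  exact Finset.sum_congr rfl fun i _ => by ring

theorem two_by_two {P B G T c11 c12 c22 X Y : ℝ}
    (h1 : P * X + B * (c11 * X + c12 * Y) + T * (c12 * X + c22 * Y) = 0)
    (h2 : P * Y + T * (c11 * X + c12 * Y) + G * (c12 * X + c22 * Y) = 0)
    (hP : 0 < P)
    (hD : 0 < P + B * c11 + G * c22 + 2 * T * c12 + (B * G - T ^ 2) * ((c11 * c22 - c12 ^ 2) / P)) :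
    X = 0 ∧ Y = 0 := by
  set D := P + B * c11 + G * c22 + 2 * T * c12 + (B * G - T ^ 2) * ((c11 * c22 - c12 ^ 2) / P) with hDd
  have hPD : P * D = (P + B * c11 + T * c12) * (P + T * c12 + G * c22)
      - (B * c12 + T * c22) * (T * c11 + G * c12) := by
    rw [hDd]; field_simp; ring
  have hne : P * D ≠ 0 := (mul_pos hP hD).ne'
  constructor
  · have : P * D * X = 0 := by
      rw [hPD]
      linear_combination (P + T * c12 + G * c22) * h1 - (B * c12 + T * c22) * h2
    exact (mul_eq_zero.1 this).resolve_left hne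
  · have : P * D * Y = 0 := by
      rw [hPD]
      linear_combination (P + B * c11 + T * c12) * h2 - (T * c11 + G * c12) * h1
    exact (mul_eq_zero.1 this).resolve_left hne

theorem fund_inj (hS : IsOpen S) (hf : ContDiffOn ℝ (⊤ : ℕ∞) (fun p : ℝ × ℝ => Ψ p.1 p.2) S)
    (hA : A.PosDef) (hm : ∀ y : Fin n → ℝ, y ≠ 0 → (sVar A b y, sVar A g y) ∈ S)
    (hΨ : ∀ p ∈ S, 0 < Ψ p.1 p.2)
    {y : Fin n → ℝ} (hy : y ≠ 0)
    (hPi : 0 < PiF Ψ (sVar A b y) (sVar A g y))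
    (hΓ : 0 < GammaF Ψ (quadInv A b b) (quadInv A g g) (quadInv A b g) (sVar A b y) (sVar A g y))
    (v : Fin n → ℝ) (hv : ∀ j, ∑ i, v i * fundT (Fm A b g Ψ) y i j = 0) : v = 0 := by
  have hpos := alph_pos hA hy
  have hS' := hm y hy
  have hΨ0 : 0 < Ψ (sVar A b y) (sVar A g y) := hΨ _ hS'
  obtain ⟨q1, q2⟩ := dQF hS hf hS'
  obtain ⟨r1, r2⟩ := dRF hS hf hS'
  obtain ⟨t1, t2⟩ := drhoF hS hf hS'
  rw [q1, r1] at t1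
  rw [q2, r2] at t2
  have h : ∀ w : Fin n → ℝ, _ := fun w => by
    have h0 : ∑ j, w j * ∑ i, v i * fundT (Fm A b g Ψ) y i j = 0 := by simp [hv]
    simp only [fund_has hS hf hA hm hy] at h0
    rw [sum_gv1] at h0
    exact h0
  have hv' := hv
  simp only [fund_has hS hf hA hm hy] at hv'
  have hy1 := h y
  have hb1 := h (hUp A b y)
  have hg1 := h (hUp A g y)
  rw [hUp_A hA, hUp_y hA hy, hUp_dot hA, hUp_dot hA] at hb1 hg1
  rw [quadInv_symm hA g b] at hg1
  have e1 : y ⬝ᵥ (A *ᵥ y) = alph A y * alph A y := (alph_sq hA y).symm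
  have e2 : y ⬝ᵥ b = sVar A b y * alph A y := by
    rw [dotProduct_comm, show b ⬝ᵥ y = oneForm b y from rfl, sVar]; field_simp
  have e3 : y ⬝ᵥ g = sVar A g y * alph A y := by
    rw [dotProduct_comm, show g ⬝ᵥ y = oneForm g y from rfl, sVar]; field_simp
  have e4 : y ⬝ᵥ (A *ᵥ v) = (A *ᵥ y) ⬝ᵥ v / alph A y * alph A y := by
    rw [symm_dot hA, dotProduct_comm]; field_simp
  rw [e1, e2, e3, e4] at hy1
  set m := (A *ᵥ y) ⬝ᵥ v / alph A y
  set p := sVar A b y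
  set q := sVar A g y
  set X := b ⬝ᵥ v - p * m with hX
  set Y := g ⬝ᵥ v - q * m with hY
  set α := alph A y
  have k0 : Ψ p q * m + Ds Ψ p q * X + Dt Ψ p q * Y = 0 := by
    have : α * Ψ p q * (Ψ p q * m + Ds Ψ p q * X + Dt Ψ p q * Y) = 0 := by
      rw [← hy1]
      unfold gv1
      rw [q1, q2, r1, r2, t1, t2]
      simp only [rhoF, QF, RF, PiF]
      field_simp
      ring
    exact (mul_eq_zero.1 this).resolve_left (by positivity)
  have k1 : PiF Ψ p q * X + (quadInv A b b - p ^ 2) * (Ds (Ds Ψ) p q * X + Dt (Ds Ψ) p q * Y)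
      + (quadInv A b g - p * q) * (Dt (Ds Ψ) p q * X + Dt (Dt Ψ) p q * Y) = 0 := by
    unfold gv1 at hb1
    rw [q1, q2, r1, r2] at hb1
    simp only [rhoF, QF, RF] at hb1
    refine (mul_eq_zero.1 (?_ : Ψ p q * _ = 0)).resolve_left hΨ0.ne'
    linear_combination hb1 - ((quadInv A b b - p ^ 2) * Ds Ψ p q + (quadInv A b g - p * q) * Dt Ψ p q) * k0
  have k2 : PiF Ψ p q * Y + (quadInv A b g - p * q) * (Ds (Ds Ψ) p q * X + Dt (Ds Ψ) p q * Y)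
      + (quadInv A g g - q ^ 2) * (Dt (Ds Ψ) p q * X + Dt (Dt Ψ) p q * Y) = 0 := by
    unfold gv1 at hg1
    rw [q1, q2, r1, r2] at hg1
    simp only [rhoF, QF, RF] at hg1
    refine (mul_eq_zero.1 (?_ : Ψ p q * _ = 0)).resolve_left hΨ0.ne'
    linear_combination hg1 - ((quadInv A b g - p * q) * Ds Ψ p q + (quadInv A g g - q ^ 2) * Dt Ψ p q) * k0
  obtain ⟨hX0, hY0⟩ := two_by_two k1 k2 hPi hΓ
  rw [hX0, hY0] at k0
  have hm0 : m = 0 := by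
    have : Ψ p q * m = 0 := by linarith
    exact (mul_eq_zero.1 this).resolve_left hΨ0.ne'
  rw [hX0, hY0, hm0] at hv'
  have hAv : A *ᵥ v = 0 := by
    funext j
    have := hv' j
    simp only [gv1, rhoF, zero_mul, mul_zero, add_zero, zero_div] at this
    exact (mul_eq_zero.1 this).resolve_left (mul_pos hΨ0 hPi).ne'
  by_contra hne
  have := hA.dotProduct_mulVec_pos hne
  rw [hAv] at this
  simp at this

theorem gmat_unit {M : Matrix (Fin n) (Fin n) ℝ}
    (h : ∀ v : Fin n → ℝ, (∀ j, ∑ i, v i * M i j = 0) → v = 0) : IsUnit M.det := by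
  rw [isUnit_iff_ne_zero]
  intro h0
  obtain ⟨v, hv, hv'⟩ := exists_vecMul_eq_zero_iff.2 h0
  exact hv (h v fun j => congrFun hv' j)

end final

section xpart
variable {n : ℕ}

open Matrix

/-- Total contraction of a 3-index array with `y`. -/
def T3 (y : Fin n → ℝ) (d : Fin n → Fin n → Fin n → ℝ) : ℝ :=
  ∑ i, ∑ j, ∑ k, d i j k * y i * y j * y k

theorem T3_12 (y : Fin n → ℝ) (d : Fin n → Fin n → Fin n → ℝ) :
    T3 y (fun i j k => d j i k) = T3 y d := by
  unfold T3
  rw [Finset.sum_comm]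
  exact Finset.sum_congr rfl fun i _ => Finset.sum_congr rfl fun j _ =>
    Finset.sum_congr rfl fun k _ => by ring

theorem T3_23 (y : Fin n → ℝ) (d : Fin n → Fin n → Fin n → ℝ) :
    T3 y (fun i j k => d i k j) = T3 y d := by
  unfold T3
  refine Finset.sum_congr rfl fun i _ => ?_
  rw [Finset.sum_comm]
  exact Finset.sum_congr rfl fun j _ => Finset.sum_congr rfl fun k _ => by ring

theorem T3_lin (y : Fin n → ℝ) (d e f : Fin n → Fin n → Fin n → ℝ) :
    T3 y (fun i j k => d i j k + e i j k - f i j k) = T3 y d + T3 y e - T3 y f := by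
  simp only [T3, sub_mul, add_mul, Finset.sum_add_distrib, Finset.sum_sub_distrib]

theorem inv_contract {M : Matrix (Fin n) (Fin n) ℝ} (hM : IsUnit M.det) {y c : Fin n → ℝ}
    (hc : ∀ j, ∑ i, y i * M i j = c j) (N : Fin n → ℝ) :
    ∑ r, c r * ∑ l, M⁻¹ r l * N l = ∑ l, y l * N l := by
  have h : c = y ᵥ* M := funext fun j => (hc j).symm
  change c ⬝ᵥ (M⁻¹ *ᵥ N) = y ⬝ᵥ N
  rw [h, dotProduct_mulVec, vecMul_vecMul, mul_nonsing_inv _ hM, vecMul_one]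

/-- Contraction of the spray with `F ℓ`. -/
theorem spray_contract {F : (Fin n → ℝ) → (Fin n → ℝ) → ℝ} {x y : Fin n → ℝ}
    (hM : IsUnit (gmatF F x y).det) {c : Fin n → ℝ}
    (hc : ∀ j, ∑ i, y i * gmatF F x y i j = c j) :
    ∑ r, c r * sprayF F x y r = (1 / 4) * T3 y (fun i j k => pd (fun z => gmatF F z y i j) x k) := by
  unfold sprayF
  have e : ∀ r, ∀ Z : ℝ, c r * (1 / 4 * Z) = 1 / 4 * (c r * Z) := fun r Z => by ring
  simp only [e]
  rw [← Finset.mul_sum, inv_contract hM hc]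
  congr 1
  set d : Fin n → Fin n → Fin n → ℝ := fun i j k => pd (fun z => gmatF F z y i j) x k with hd
  have h1 : ∑ l, y l * ∑ j, ∑ k, (pd (fun z => gmatF F z y j l) x k
        + pd (fun z => gmatF F z y l k) x j
        - pd (fun z => gmatF F z y j k) x l) * y j * y k
      = T3 y (fun l j k => d j l k + d l k j - d j k l) := by
    simp only [T3, Finset.mul_sum]
    exact Finset.sum_congr rfl fun i _ => Finset.sum_congr rfl fun j _ =>
      Finset.sum_congr rfl fun k _ => by simp only [hd]; ring
  rw [h1, T3_lin, T3_12 y d, T3_23 y d, T3_12 y (fun j l k => d j k l), T3_23 y d]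
  ring

theorem alphaG_contract {a : (Fin n → ℝ) → Matrix (Fin n) (Fin n) ℝ} {x : Fin n → ℝ}
    (hA : (a x).PosDef) (y : Fin n → ℝ) :
    ∑ r, (a x *ᵥ y) r * alphaG a x y r = (1 / 4) * T3 y (fun i j k => pd (fun z => a z i j) x k) := by
  set d : Fin n → Fin n → Fin n → ℝ := fun i j k => pd (fun z => a z i j) x k with hd
  have e : ∀ r, alphaG a x y r = ∑ l, (a x)⁻¹ r l * (1 / 4 * ∑ j, ∑ k,
      (d k l j + d j l k - d j k l) * y j * y k) := by
    intro r
    simp only [alphaG, chr, Finset.mul_sum, Finset.sum_mul, hd]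
    rw [Finset.sum_comm]
    conv_rhs => rw [Finset.sum_comm]
    rw [Finset.sum_comm]
    refine Finset.sum_congr rfl fun i _ => ?_
    conv_rhs => rw [Finset.sum_comm]
    exact Finset.sum_congr rfl fun j _ => Finset.sum_congr rfl fun k _ => by ring
  have hT : (a x)ᵀ = a x := by
    have := hA.isHermitian.eq
    rwa [conjTranspose_eq_transpose_of_trivial] at this
  simp only [e]
  rw [inv_contract ((isUnit_iff_isUnit_det _).1 hA.isUnit) (y := y)
    (fun j => by
      change (y ᵥ* a x) j = _
      rw [← mulVec_transpose, hT])]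
  have h1 : ∑ l, y l * (1 / 4 * ∑ j, ∑ k, (d k l j + d j l k - d j k l) * y j * y k)
      = 1 / 4 * T3 y (fun l j k => d k l j + d j l k - d j k l) := by
    simp only [T3, Finset.mul_sum]
    exact Finset.sum_congr rfl fun i _ => Finset.sum_congr rfl fun j _ =>
      Finset.sum_congr rfl fun k _ => by ring
  rw [h1, T3_lin, T3_12 y d, T3_12 y (fun j l k => d j k l), T3_23 y d,
    T3_23 y (fun l j k => d j l k), T3_12 y d]
  ring

theorem r00_eq (a : (Fin n → ℝ) → Matrix (Fin n) (Fin n) ℝ) (v : (Fin n → ℝ) → Fin n → ℝ)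
    (x y : Fin n → ℝ) :
    r00 a v x y = (∑ i, ∑ j, pd (fun z => v z i) x j * y i * y j)
      - 2 * ∑ r, v x r * alphaG a x y r := by
  have h1 : r00 a v x y = ∑ i, ∑ j, covD a v x i j * y i * y j := by
    have hs : ∑ i, ∑ j, covD a v x j i * y i * y j = ∑ i, ∑ j, covD a v x i j * y i * y j := by
      rw [Finset.sum_comm]
      exact Finset.sum_congr rfl fun i _ => Finset.sum_congr rfl fun j _ => by ring
    have : r00 a v x y = 1 / 2 * ((∑ i, ∑ j, covD a v x i j * y i * y j)
        + ∑ i, ∑ j, covD a v x j i * y i * y j) := by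
      simp only [r00, rSym, ← Finset.sum_add_distrib, Finset.mul_sum]
      exact Finset.sum_congr rfl fun i _ => Finset.sum_congr rfl fun j _ => by ring
    rw [this, hs]; ring
  have h2 : 2 * ∑ r, v x r * alphaG a x y r
      = ∑ i, ∑ j, (∑ k, v x k * chr a x k i j) * y i * y j := by
    simp only [alphaG, Finset.mul_sum, Finset.sum_mul]
    rw [Finset.sum_comm]
    refine Finset.sum_congr rfl fun i _ => ?_
    rw [Finset.sum_comm]
    exact Finset.sum_congr rfl fun j _ => Finset.sum_congr rfl fun k _ => by ring
  rw [h1, h2, ← Finset.sum_sub_distrib]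
  refine Finset.sum_congr rfl fun i _ => ?_
  rw [← Finset.sum_sub_distrib]
  exact Finset.sum_congr rfl fun j _ => by rw [covD]; ring

theorem oneForm_x {v : (Fin n → ℝ) → Fin n → ℝ} {x : Fin n → ℝ}
    (h : ∀ i, DifferentiableAt ℝ (fun z => v z i) x) (y : Fin n → ℝ) :
    HasFDerivAt (fun z => oneForm (v z) y) (∑ i, y i • fderiv ℝ (fun z => v z i) x) x := by
  unfold oneForm
  exact HasFDerivAt.fun_sum fun i _ => (h i).hasFDerivAt.mul_const (y i)

theorem alph_x {a : (Fin n → ℝ) → Matrix (Fin n) (Fin n) ℝ} {x : Fin n → ℝ}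
    (hA : (a x).PosDef) (h : ∀ i j, DifferentiableAt ℝ (fun z => a z i j) x) {y : Fin n → ℝ}
    (hy : y ≠ 0) :
    HasFDerivAt (fun z => alph (a z) y)
      ((1 / (2 * alph (a x) y)) • ∑ i, ∑ j, y j • y i • fderiv ℝ (fun z => a z i j) x) x := by
  have hpos := alph_pos hA hy
  have h1 : HasFDerivAt (fun z => ∑ i, ∑ j, a z i j * y i * y j)
      (∑ i, ∑ j, y j • y i • fderiv ℝ (fun z => a z i j) x) x :=
    HasFDerivAt.fun_sum fun i _ => HasFDerivAt.fun_sum fun j _ =>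
      ((h i j).hasFDerivAt.mul_const (y i)).mul_const (y j)
  refine h1.sqrt ?_
  rw [quad_eq, ← alph_sq hA]
  positivity

theorem sum_apply_y {v : (Fin n → ℝ) → Fin n → ℝ} {x : Fin n → ℝ} (y : Fin n → ℝ) :
    (∑ i, y i • fderiv ℝ (fun z => v z i) x) y = ∑ i, ∑ j, pd (fun z => v z i) x j * y i * y j := by
  simp only [_root_.sum_apply, _root_.smul_apply, smul_eq_mul]
  refine Finset.sum_congr rfl fun i _ => ?_
  rw [← sum_pd, Finset.mul_sum]
  exact Finset.sum_congr rfl fun j _ => by rw [pd]; ring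

theorem sum_apply_a {a : (Fin n → ℝ) → Matrix (Fin n) (Fin n) ℝ} {x : Fin n → ℝ} (y : Fin n → ℝ) :
    (∑ i, ∑ j, y j • y i • fderiv ℝ (fun z => a z i j) x) y
      = T3 y (fun i j k => pd (fun z => a z i j) x k) := by
  simp only [_root_.sum_apply, _root_.smul_apply, smul_eq_mul, T3]
  refine Finset.sum_congr rfl fun i _ => Finset.sum_congr rfl fun j _ => ?_
  rw [← sum_pd, Finset.mul_sum, Finset.mul_sum]
  exact Finset.sum_congr rfl fun k _ => by rw [pd]; ring

theorem main_aux (U : Set (Fin n → ℝ)) (hU : IsOpen U)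
    (a : (Fin n → ℝ) → Matrix (Fin n) (Fin n) ℝ)
    (haS : ∀ x ∈ U, ∀ i j, DifferentiableAt ℝ (fun x => a x i j) x)
    (haP : ∀ x ∈ U, (a x).PosDef)
    (bv gv : (Fin n → ℝ) → Fin n → ℝ)
    (hbS : ∀ x ∈ U, ∀ i, DifferentiableAt ℝ (fun x => bv x i) x)
    (hgS : ∀ x ∈ U, ∀ i, DifferentiableAt ℝ (fun x => gv x i) x)
    (S : Set (ℝ × ℝ)) (hS : IsOpen S) (Ψ : ℝ → ℝ → ℝ)
    (hΨ : ContDiffOn ℝ (⊤ : ℕ∞) (fun p : ℝ × ℝ => Ψ p.1 p.2) S)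
    (hm : ∀ x ∈ U, ∀ y : Fin n → ℝ, y ≠ 0 → (sVar (a x) (bv x) y, sVar (a x) (gv x) y) ∈ S)
    (hΨpos : ∀ p ∈ S, 0 < Ψ p.1 p.2)
    (hPipos : ∀ x ∈ U, ∀ y : Fin n → ℝ, y ≠ 0 →
      0 < PiF Ψ (sVar (a x) (bv x) y) (sVar (a x) (gv x) y))
    (hΓpos : ∀ x ∈ U, ∀ y : Fin n → ℝ, y ≠ 0 →
      0 < GammaF Ψ (quadInv (a x) (bv x) (bv x)) (quadInv (a x) (gv x) (gv x))
          (quadInv (a x) (bv x) (gv x)) (sVar (a x) (bv x) y) (sVar (a x) (gv x) y))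
    (x : Fin n → ℝ) (hx : x ∈ U) (y : Fin n → ℝ) (hy : y ≠ 0) :
    Ds Ψ (sVar (a x) (bv x) y) (sVar (a x) (gv x) y) * r00 a bv x y
      + Dt Ψ (sVar (a x) (bv x) y) (sVar (a x) (gv x) y) * r00 a gv x y =
          ∑ r, pd (Fm (a x) (bv x) (gv x) Ψ) y r *
            (2 * sprayF (fun z w => Fm (a z) (bv z) (gv z) Ψ w) x y r
              - 2 * alphaG a x y r) := by
  have hA := haP x hx
  have hpos := alph_pos hA hy
  have hα := alph_x hA (haS x hx) hy
  have hβ := oneForm_x (hbS x hx) y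
  have hγ := oneForm_x (hgS x hx) y
  have hFpos : 0 < Fm (a x) (bv x) (gv x) Ψ y := mul_pos hpos (hΨpos _ (hm x hx y hy))
  have hFx := F_has hS hΨ hα hβ hγ hpos.ne' (hm x hx y hy)
  -- differentiability of the fundamental tensor in `x`
  have hcd : ∀ f : ℝ → ℝ → ℝ, ContDiffOn ℝ (⊤ : ℕ∞) (fun p : ℝ × ℝ => f p.1 p.2) S →
      DifferentiableAt ℝ (fun z => f (sVar (a z) (bv z) y) (sVar (a z) (gv z) y)) x := fun f hf =>
    (comp_has hS hf hα hβ hγ hpos.ne' (hm x hx y hy)).differentiableAt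
  have hgd : ∀ i j, DifferentiableAt ℝ
      (fun z => gmatF (fun z w => Fm (a z) (bv z) (gv z) Ψ w) z y i j) x := by
    intro i j
    have hev : (fun z => gmatF (fun z w => Fm (a z) (bv z) (gv z) Ψ w) z y i j) =ᶠ[nhds x] fun z =>
        gv1 Ψ (alph (a z) y) (sVar (a z) (bv z) y) (sVar (a z) (gv z) y)
        ((a z *ᵥ y) ⬝ᵥ Pi.single i 1 / alph (a z) y)
        (bv z ⬝ᵥ Pi.single i 1 - sVar (a z) (bv z) y * ((a z *ᵥ y) ⬝ᵥ Pi.single i 1 / alph (a z) y))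
        (gv z ⬝ᵥ Pi.single i 1 - sVar (a z) (gv z) y * ((a z *ᵥ y) ⬝ᵥ Pi.single i 1 / alph (a z) y))
        ((a z *ᵥ Pi.single i 1) j) ((a z *ᵥ y) j) (bv z j) (gv z j) := by
      filter_upwards [hU.mem_nhds hx] with z hz
      rw [← fund_has hS hΨ (haP z hz) (hm z hz) hy]
      simp [gmatF, Pi.single_apply]
    refine DifferentiableAt.congr_of_eventuallyEq ?_ hev
    have d1 : DifferentiableAt ℝ (fun z => alph (a z) y) x := hα.differentiableAt
    have hdiv : ∀ η : (Fin n → ℝ) → ℝ, DifferentiableAt ℝ η x →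
        DifferentiableAt ℝ (fun z => η z / alph (a z) y) x := fun η h => by
      simp only [div_eq_mul_inv]
      exact h.fun_mul (d1.fun_inv hpos.ne')
    have d2 : ∀ w : Fin n → ℝ, ∀ j, DifferentiableAt ℝ (fun z => (a z *ᵥ w) j) x := by
      intro w j
      have h := HasFDerivAt.fun_sum (u := Finset.univ) fun k _ =>
        ((haS x hx j k).hasFDerivAt.mul_const (w k))
      exact h.differentiableAt
    have d3 : ∀ j, DifferentiableAt ℝ (fun z => bv z j) x := hbS x hx
    have d4 : ∀ j, DifferentiableAt ℝ (fun z => gv z j) x := hgS x hx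
    have d5 : DifferentiableAt ℝ (fun z => sVar (a z) (bv z) y) x := hdiv _ hβ.differentiableAt
    have d6 : DifferentiableAt ℝ (fun z => sVar (a z) (gv z) y) x := hdiv _ hγ.differentiableAt
    have sQ := smooth_QF hS hΨ
    have sR := smooth_RF hS hΨ
    have sP := smooth_rhoF hS hΨ
    have c1 := hcd _ sP
    have c2 := hcd _ sQ
    have c3 := hcd _ sR
    have c4 := hcd _ (smooth_Ds hS sP)
    have c5 := hcd _ (smooth_Dt hS sP)
    have c6 := hcd _ (smooth_Ds hS sQ)
    have c7 := hcd _ (smooth_Dt hS sQ)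
    have c8 := hcd _ (smooth_Ds hS sR)
    have c9 := hcd _ (smooth_Dt hS sR)
    simp only [dotProduct_single, mul_one]
    have dm : DifferentiableAt ℝ (fun z => (a z *ᵥ y) i / alph (a z) y) x :=
      hdiv _ (d2 y i)
    have dX := (d3 i).fun_sub (d5.fun_mul dm)
    have dY := (d4 i).fun_sub (d6.fun_mul dm)
    unfold gv1
    exact (((c1.fun_mul (d2 _ j)).fun_add
      ((hdiv _ ((c4.fun_mul dX).fun_add (c5.fun_mul dY))).fun_mul (d2 y j))).fun_add
      ((((dm.fun_mul c2).fun_add (c6.fun_mul dX)).fun_add (c7.fun_mul dY)).fun_mul (d3 j))).fun_add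
      ((((dm.fun_mul c3).fun_add (c8.fun_mul dX)).fun_add (c9.fun_mul dY)).fun_mul (d4 j))
  -- the contraction of the spray
  have hunit : IsUnit (gmatF (fun z w => Fm (a z) (bv z) (gv z) Ψ w) x y).det :=
    gmat_unit fun v hv => fund_inj hS hΨ hA (hm x hx) hΨpos hy (hPipos x hx y hy)
      (hΓpos x hx y hy) v hv
  have hsp := spray_contract hunit (c := fun j => Fm (a x) (bv x) (gv x) Ψ y *
      pd (Fm (a x) (bv x) (gv x) Ψ) y j) (fun j => fund_euler hS hΨ hA (hm x hx) hy j)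
  have hF2 : HasFDerivAt (fun z => ∑ i, ∑ j,
      gmatF (fun z w => Fm (a z) (bv z) (gv z) Ψ w) z y i j * y i * y j)
      (∑ i, ∑ j, y j • y i • fderiv ℝ
        (fun z => gmatF (fun z w => Fm (a z) (bv z) (gv z) Ψ w) z y i j) x) x :=
    HasFDerivAt.fun_sum fun i _ => HasFDerivAt.fun_sum fun j _ =>
      ((hgd i j).hasFDerivAt.mul_const (y i)).mul_const (y j)
  have hev2 : (fun z => Fm (a z) (bv z) (gv z) Ψ y ^ 2) =ᶠ[nhds x] (fun z => ∑ i, ∑ j,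
      gmatF (fun z w => Fm (a z) (bv z) (gv z) Ψ w) z y i j * y i * y j) := by
    filter_upwards [hU.mem_nhds hx] with z hz
    have h1 : ∑ i, ∑ j, gmatF (fun z w => Fm (a z) (bv z) (gv z) Ψ w) z y i j * y i * y j
        = ∑ j, y j * ∑ i, y i * fundT (Fm (a z) (bv z) (gv z) Ψ) y i j := by
      rw [Finset.sum_comm]
      simp only [Finset.mul_sum]
      exact Finset.sum_congr rfl fun i _ => Finset.sum_congr rfl fun j _ => by
        rw [gmatF, Matrix.of_apply]; ring
    rw [h1]
    simp only [fund_euler hS hΨ (haP z hz) (hm z hz) hy]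
    have e : ∀ j, y j * (Fm (a z) (bv z) (gv z) Ψ y * pd (Fm (a z) (bv z) (gv z) Ψ) y j)
      = Fm (a z) (bv z) (gv z) Ψ y * (y j * pd (Fm (a z) (bv z) (gv z) Ψ) y j) := fun j => by ring
    simp only [e]
    rw [← Finset.mul_sum, F_euler hS hΨ (haP z hz) (hm z hz) hy]
    ring
  have hT := sum_apply_a (a := fun z => gmatF (fun z w => Fm (a z) (bv z) (gv z) Ψ w) z y) (x := x) y
  have hF2' := (hF2.congr_of_eventuallyEq hev2).unique (hFx.pow 2)
  rw [hF2'] at hT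
  rw [← hT] at hsp
  -- the three contractions of `D`
  have hL : ∀ N : Fin n → ℝ, ∑ r, pd (Fm (a x) (bv x) (gv x) Ψ) y r * N r =
      PiF Ψ (sVar (a x) (bv x) y) (sVar (a x) (gv x) y) * ((alph (a x) y)⁻¹ * ∑ r, (a x *ᵥ y) r * N r)
      + Ds Ψ (sVar (a x) (bv x) y) (sVar (a x) (gv x) y) * ∑ r, bv x r * N r
      + Dt Ψ (sVar (a x) (bv x) y) (sVar (a x) (gv x) y) * ∑ r, gv x r * N r := by
    intro N
    have : ∑ r, pd (Fm (a x) (bv x) (gv x) Ψ) y r * N r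
        = ∑ r, N r * (fderiv ℝ (Fm (a x) (bv x) (gv x) Ψ) y) (Pi.single r 1) :=
      Finset.sum_congr rfl fun r _ => by rw [pd]; ring
    rw [this, sum_pd, (Fm_has hS hΨ hA hy (hm x hx y hy)).fderiv]
    simp only [_root_.smul_apply, _root_.add_apply, dotL_apply, smul_eq_mul]
    rfl
  have hs2 : ∑ r, pd (Fm (a x) (bv x) (gv x) Ψ) y r *
      sprayF (fun z w => Fm (a z) (bv z) (gv z) Ψ w) x y r = 1 / 2 *
      (PiF Ψ (sVar (a x) (bv x) y) (sVar (a x) (gv x) y) *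
        ((1 / (2 * alph (a x) y)) * T3 y (fun i j k => pd (fun z => a z i j) x k))
      + Ds Ψ (sVar (a x) (bv x) y) (sVar (a x) (gv x) y) *
          (∑ i, ∑ j, pd (fun z => bv z i) x j * y i * y j)
      + Dt Ψ (sVar (a x) (bv x) y) (sVar (a x) (gv x) y) *
          (∑ i, ∑ j, pd (fun z => gv z i) x j * y i * y j)) := by
    refine mul_left_cancel₀ hFpos.ne' ?_
    rw [Finset.mul_sum]
    simp only [← mul_assoc]
    simp only [mul_assoc] at hsp ⊢
    rw [hsp]
    simp only [_root_.smul_apply, _root_.add_apply, sum_apply_y, sum_apply_a, smul_eq_mul]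
    change 1 / 4 * ((2 • Fm (a x) (bv x) (gv x) Ψ y ^ (2 - 1)) * (PiF Ψ (sVar (a x) (bv x) y) (sVar (a x) (gv x) y) * _
      + Ds Ψ (sVar (a x) (bv x) y) (sVar (a x) (gv x) y) * _ +
        Dt Ψ (sVar (a x) (bv x) y) (sVar (a x) (gv x) y) * _)) = _
    simp only [nsmul_eq_mul, Nat.cast_ofNat]
    ring
  have hfin : ∑ r, pd (Fm (a x) (bv x) (gv x) Ψ) y r *
            (2 * sprayF (fun z w => Fm (a z) (bv z) (gv z) Ψ w) x y r
              - 2 * alphaG a x y r)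
      = 2 * (∑ r, pd (Fm (a x) (bv x) (gv x) Ψ) y r *
          sprayF (fun z w => Fm (a z) (bv z) (gv z) Ψ w) x y r)
        - 2 * ∑ r, pd (Fm (a x) (bv x) (gv x) Ψ) y r * alphaG a x y r := by
    rw [Finset.mul_sum, Finset.mul_sum, ← Finset.sum_sub_distrib]
    exact Finset.sum_congr rfl fun r _ => by ring
  rw [hfin, hs2, hL, alphaG_contract hA, r00_eq, r00_eq]
  field_simp
  ring

end xpart

/-- `Ψ_s·^βr_00 + Ψ_s̄·^γr_00 = ℓ_r D^r` with `D^i = 2G^i − 2^αG^i`. -/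
theorem statement14
    (n : ℕ) (hn : 2 ≤ n)
    (U : Set (Fin n → ℝ)) (hU : IsOpen U)
    (a : (Fin n → ℝ) → Matrix (Fin n) (Fin n) ℝ)
    (haS : ∀ i j, ContDiffOn ℝ (⊤ : ℕ∞) (fun x => a x i j) U)
    (haP : ∀ x ∈ U, (a x).PosDef)
    (bv gv : (Fin n → ℝ) → Fin n → ℝ)
    (hbS : ∀ i, ContDiffOn ℝ (⊤ : ℕ∞) (fun x => bv x i) U)
    (hgS : ∀ i, ContDiffOn ℝ (⊤ : ℕ∞) (fun x => gv x i) U)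
    (b₀ g₀ : ℝ) (hb₀ : 0 < b₀) (hg₀ : 0 < g₀)
    (hb : ∀ x ∈ U, Real.sqrt (quadInv (a x) (bv x) (bv x)) < b₀)
    (hg : ∀ x ∈ U, Real.sqrt (quadInv (a x) (gv x) (gv x)) < g₀)
    (Ψ : ℝ → ℝ → ℝ)
    (hΨ : ContDiffOn ℝ (⊤ : ℕ∞) (fun p : ℝ × ℝ => Ψ p.1 p.2)
      (Set.Ioo (-b₀) b₀ ×ˢ Set.Ioo (-g₀) g₀))
    (hΨpos : ∀ p ∈ Set.Ioo (-b₀) b₀ ×ˢ Set.Ioo (-g₀) g₀, 0 < Ψ p.1 p.2)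
    (hPipos : ∀ x ∈ U, ∀ y : Fin n → ℝ, y ≠ 0 →
      0 < PiF Ψ (sVar (a x) (bv x) y) (sVar (a x) (gv x) y))
    (hΓpos : ∀ x ∈ U, ∀ y : Fin n → ℝ, y ≠ 0 →
      0 < GammaF Ψ (quadInv (a x) (bv x) (bv x)) (quadInv (a x) (gv x) (gv x))
          (quadInv (a x) (bv x) (gv x)) (sVar (a x) (bv x) y) (sVar (a x) (gv x) y))
 :
    ∀ x ∈ U, ∀ y : Fin n → ℝ, y ≠ 0 →
      ∀ p q : ℝ, p = sVar (a x) (bv x) y → q = sVar (a x) (gv x) y →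
        Ds Ψ p q * r00 a bv x y + Dt Ψ p q * r00 a gv x y =
          ∑ r, pd (Fm (a x) (bv x) (gv x) Ψ) y r *
            (2 * sprayF (fun z w => Fm (a z) (bv z) (gv z) Ψ w) x y r
              - 2 * alphaG a x y r) := by
  intro x hx y hy p q hp hq
  subst hp hq
  have hS : IsOpen (Set.Ioo (-b₀) b₀ ×ˢ Set.Ioo (-g₀) g₀) := isOpen_Ioo.prod isOpen_Ioo
  exact main_aux U hU a
    (fun x hx i j => ((haS i j).contDiffAt (hU.mem_nhds hx)).differentiableAt (by simp)) haP bv gv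
    (fun x hx i => ((hbS i).contDiffAt (hU.mem_nhds hx)).differentiableAt (by simp))
    (fun x hx i => ((hgS i).contDiffAt (hU.mem_nhds hx)).differentiableAt (by simp))
    _ hS Ψ hΨ
    (fun x hx y hy => ⟨sVar_mem (haP x hx) hy (hb x hx), sVar_mem (haP x hx) hy (hg x hx)⟩)
    hΨpos hPipos hΓpos x hx y hy
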